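/- arXiv:1604.01762 — 3 statements merged into one kernel-verified Lean document; each statement's English description precedes it below -/
import Mathlib

section
/- Let n ≥ 2 and let F : ℝⁿ → ℝⁿ be a bijection satisfying F(x) = Σᵢ fᵢ(xᵢ)eᵢ for every x = (x₁, ..., xₙ) ∈ ℝⁿ, where each fᵢ : ℝ → ℝ is a bijection with fᵢ(0) = 0 and fᵢ(1) = 1. Let x₀ ∈ ℝⁿ \ {0} be a vector of the form x₀ = Σᵢ αᵢeᵢ where each αᵢ ∈ {0, 1}. Assume that F maps any line through the origin into a line, and any line through x₀ into a line. Then F(x) = x for every x ∈ ℝⁿ. -/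
/-- The line through `a` in direction `b`. -/
def lineThru {k : ℕ} (a b : Fin k → ℝ) : Set (Fin k → ℝ) :=
  {x | ∃ t : ℝ, x = a + t • b}

/-- A subset of `ℝᵏ` is a line if it is of the form `a + ℝ b` with `b ≠ 0`. -/
def IsLine {k : ℕ} (s : Set (Fin k → ℝ)) : Prop :=
  ∃ a b : Fin k → ℝ, b ≠ 0 ∧ s = lineThru a b

/-- A multiplicative injective function with `f (1 + t) = 1 + f t` is the identity. -/
theorem aux_id (f : ℝ → ℝ) (h0 : f 0 = 0) (h1 : f 1 = 1)
    (hmul : ∀ x y, f (x * y) = f x * f y) (hadd : ∀ t, f (1 + t) = 1 + f t) :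
    ∀ x, f x = x := by
  have hadd' : ∀ x y, f (x + y) = f x + f y := by
    intro x y
    by_cases hx : x = 0
    · simp [hx, h0]
    · have e1 : x + y = x * (1 + y / x) := by field_simp
      have e2 : f x * f (y / x) = f y := by
        rw [← hmul]; congr 1; field_simp
      rw [e1, hmul, hadd, mul_add, e2, mul_one]
  let φ : ℝ →+* ℝ :=
    { toFun := f, map_one' := h1, map_mul' := hmul, map_zero' := h0, map_add' := hadd' }
  intro x
  have : φ = RingHom.id ℝ := Subsingleton.elim _ _
  exact congrArg (fun ψ : ℝ →+* ℝ => ψ x) this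

theorem aux_neg (f : ℝ → ℝ) (hinj : Function.Injective f) (h1 : f 1 = 1)
    (hmul : ∀ x y, f (x * y) = f x * f y) : f (-1) = -1 := by
  have h := hmul (-1) (-1)
  norm_num [h1] at h
  have h2 : (f (-1) - 1) * (f (-1) + 1) = 0 := by linarith
  rcases mul_eq_zero.1 h2 with h3 | h3
  · have : f (-1) = f 1 := by rw [h1]; linarith
    have := hinj this
    norm_num at this
  · linarith

/-- The case where the two coordinates of `x₀` are `1, 0`. -/
theorem aux_case0 (f : ℝ → ℝ) (hinj : Function.Injective f) (h0 : f 0 = 0) (h1 : f 1 = 1)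
    (hmul : ∀ x y, f (x * y) = f x * f y)
    (h : ∀ t, f (1 + t) - 1 = (f (1 + 1) - 1) * f t) : ∀ x, f x = x := by
  have hneg := aux_neg f hinj h1 hmul
  have h2 := h (-1)
  rw [hneg, add_neg_cancel, h0] at h2
  have hc : f (1 + 1) - 1 = 1 := by linarith
  apply aux_id f h0 h1 hmul
  intro t
  have := h t
  rw [hc] at this
  linarith

/-- The case where the two coordinates of `x₀` are `1, 1`. -/
theorem aux_case1 (f : ℝ → ℝ) (hinj : Function.Injective f) (h0 : f 0 = 0) (h1 : f 1 = 1)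
    (hmul : ∀ x y, f (x * y) = f x * f y)
    (h : ∀ t b, (f (1 + t) - 1) * (f (1 + b) - 1) = (f (1 + 1) - 1) * (f (1 + t * b) - 1)) :
    ∀ x, f x = x := by
  have hneg := aux_neg f hinj h1 hmul
  obtain ⟨g, hg⟩ : ∃ g : ℝ → ℝ, ∀ t, g t = f (1 + t) - 1 := ⟨_, fun _ => rfl⟩
  have hgi : Function.Injective g := by
    intro a b hab
    rw [hg, hg] at hab
    have : f (1 + a) = f (1 + b) := by linarith
    have := hinj this
    linarith
  simp only [← hg] at h
  have g0 : g 0 = 0 := by rw [hg]; simp [h1]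
  have gm1 : g (-1) = -1 := by rw [hg]; simp [h0]
  have g1 : g 1 = 1 := by
    have h3 := h (-1) (-1)
    rw [gm1] at h3
    norm_num at h3
    have h4 : (g 1 - 1) * (g 1 + 1) = 0 := by linarith
    rcases mul_eq_zero.1 h4 with h5 | h5
    · linarith
    · have : g 1 = g (-1) := by rw [gm1]; linarith
      have := hgi this
      norm_num at this
  have gmul : ∀ x y, g (x * y) = g x * g y := by
    intro x y
    rw [h, g1, one_mul]
  have hf1 : ∀ t, f (1 + t) = 1 + g t := by
    intro t; rw [hg]; ring
  have hfg : ∀ x, f x = g x := by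
    intro x
    by_cases hx : x = 0
    · rw [hx, h0, g0]
    by_cases hx1 : x = -1
    · rw [hx1, hneg, gm1]
    have gx : g x ≠ 0 := fun e => hx (hgi (e.trans g0.symm))
    have gx1 : g x + 1 ≠ 0 := fun e => hx1 (hgi (by rw [gm1]; linarith))
    have e1 : f (1 + x) = f x * f (1 + 1 / x) := by
      rw [← hmul]; congr 1; field_simp; ring
    have e2 : g x * g (1 / x) = 1 := by
      rw [← gmul, mul_one_div_cancel hx, g1]
    rw [hf1, hf1] at e1
    apply mul_right_cancel₀ gx1
    calc f x * (g x + 1) = f x * (g x + g x * g (1 / x)) := by rw [e2]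
      _ = g x * (f x * (1 + g (1 / x))) := by ring
      _ = g x * (g x + 1) := by rw [← e1]; ring
  apply aux_id f h0 h1 hmul
  intro t
  rw [hf1, hfg]

/-- Coordinates of three points of a line. -/
theorem aux_line {n : ℕ} {l : Set (Fin n → ℝ)} (hl : IsLine l) {p x y : Fin n → ℝ}
    (hp : p ∈ l) (hx : x ∈ l) (hy : y ∈ l) (i j : Fin n) :
    (x i - p i) * (y j - p j) = (y i - p i) * (x j - p j) := by
  obtain ⟨a, b, -, rfl⟩ := hl
  obtain ⟨s, rfl⟩ := hp
  obtain ⟨t, rfl⟩ := hx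
  obtain ⟨u, rfl⟩ := hy
  simp only [Pi.add_apply, Pi.smul_apply, smul_eq_mul]
  ring

theorem aux_base {n : ℕ} (F : (Fin n → ℝ) → (Fin n → ℝ)) (f : Fin n → ℝ → ℝ)
    (hF : ∀ x i, F x i = f i (x i)) (p : Fin n → ℝ) (hp : F p = p)
    (hline : ∀ b : Fin n → ℝ, b ≠ 0 →
      ∃ l : Set (Fin n → ℝ), IsLine l ∧ F '' lineThru p b ⊆ l)
    (i j : Fin n) (hij : j ≠ i) (t b : ℝ) :
    (f i (p i + t) - p i) * (f j (p j + b) - p j) =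
      (f i (p i + 1) - p i) * (f j (p j + t * b) - p j) := by
  let v : Fin n → ℝ := fun k => if k = i then 1 else b
  have vi : v i = 1 := by simp [v]
  have vj : v j = b := by simp [v, hij]
  have hv : v ≠ 0 := fun e => by
    have := congrFun e i
    rw [vi] at this
    simp at this
  obtain ⟨l, hl, hsub⟩ := hline v hv
  have mem : ∀ s : ℝ, F (p + s • v) ∈ l := fun s => hsub ⟨_, ⟨s, rfl⟩, rfl⟩
  have h0 := mem 0
  rw [zero_smul, add_zero, hp] at h0
  have := aux_line hl h0 (mem t) (mem 1) i j
  simpa [hF, vi, vj] using this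

/-- **Proposition (a diagonal bijection preserving lines through `0` and through a
0/1-vector is the identity).** Let `n ≥ 2` and let `F : ℝⁿ → ℝⁿ` be a bijection of
the form `F x = ∑ fᵢ (xᵢ) • eᵢ` with each `fᵢ` a bijection, `fᵢ 0 = 0`, `fᵢ 1 = 1`.
Let `x₀ ≠ 0` have all coordinates `0` or `1`. If `F` maps every line through the
origin and every line through `x₀` into a line, then `F` is the identity. -/
theorem diagonal_id_of_lines_through_two_points
    {n : ℕ} (hn : 2 ≤ n)
    (F : (Fin n → ℝ) → (Fin n → ℝ)) (hbij : Function.Bijective F)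
    (f : Fin n → ℝ → ℝ)
    (hf : ∀ i, Function.Bijective (f i) ∧ f i 0 = 0 ∧ f i 1 = 1)
    (hF : ∀ x : Fin n → ℝ, F x = ∑ i, f i (x i) • (Pi.single i 1 : Fin n → ℝ))
    (x₀ : Fin n → ℝ) (hx₀ : x₀ ≠ 0) (hx₀01 : ∀ i, x₀ i = 0 ∨ x₀ i = 1)
    (hline0 : ∀ b : Fin n → ℝ, b ≠ 0 →
      ∃ l : Set (Fin n → ℝ), IsLine l ∧ F '' lineThru 0 b ⊆ l)
    (hlinex : ∀ b : Fin n → ℝ, b ≠ 0 →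
      ∃ l : Set (Fin n → ℝ), IsLine l ∧ F '' lineThru x₀ b ⊆ l) :
    ∀ x : Fin n → ℝ, F x = x := by
  have hF' : ∀ x i, F x i = f i (x i) := by
    intro x i
    rw [hF, Finset.sum_apply]
    simp [Pi.single_apply]
  have F0 : F 0 = 0 := by
    funext i
    rw [hF']; exact (hf i).2.1
  have Fx : F x₀ = x₀ := by
    funext i
    rw [hF']
    rcases hx₀01 i with h | h <;> rw [h]
    · exact (hf i).2.1
    · exact (hf i).2.2
  have A : ∀ i j, j ≠ i → ∀ t b, f i t * f j b = f j (t * b) := by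
    intro i j hij t b
    have := aux_base F f hF' 0 F0 hline0 i j hij t b
    simpa [(hf i).2.2] using this
  have B := aux_base F f hF' x₀ Fx hlinex
  obtain ⟨i, hi⟩ : ∃ i, x₀ i = 1 := by
    by_contra hcon
    push Not at hcon
    exact hx₀ (funext fun i => (hx₀01 i).resolve_right (hcon i))
  have E : ∀ j, f j = f i := by
    intro j
    by_cases hij : j = i
    · rw [hij]
    · funext t
      have := A i j hij t 1
      rw [(hf j).2.2, mul_one, mul_one] at this
      exact this.symm
  have : Nontrivial (Fin n) := Fin.nontrivial_iff_two_le.2 hn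
  obtain ⟨j, hij⟩ := exists_ne i
  have hmul : ∀ x y, f i (x * y) = f i x * f i y := by
    intro x y
    have := A i j hij x y
    rw [E j] at this
    exact this.symm
  obtain ⟨hb, h0, h1⟩ := hf i
  have key : ∀ x, f i x = x := by
    rcases hx₀01 j with hj | hj
    · apply aux_case0 (f i) hb.1 h0 h1 hmul
      intro t
      have := B i j hij t 1
      simpa only [hi, hj, E j, zero_add, sub_zero, mul_one, h1] using this
    · apply aux_case1 (f i) hb.1 h0 h1 hmul
      intro t b
      have := B i j hij t b
      simpa only [hi, hj, E j] using this
  intro x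
  funext k
  rw [hF', E k, key]
end

section
/- Let F : ℝⁿ → ℝⁿ be a continuous bijective mapping, and suppose that F maps a certain line l into a line (i.e., F(l) is contained in some line). Then F maps l onto a line, i.e., F(l) equals some line. -/
namespace LineAux

open Set Metric MeasureTheory Topology

/-- Euclidean space. -/
abbrev Eu (n : ℕ) := EuclideanSpace ℝ (Fin n)

lemma det_interp {n : ℕ} (A : Eu n →L[ℝ] Eu n)
    (v : ℕ → ℝ) (hv : Function.Injective v) (t : ℝ) :
    (1 + t • A).det = ∑ i ∈ Finset.range (n+1),
      (1 + v i • A).det * (Lagrange.basis (Finset.range (n+1)) v i).eval t := by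
  classical
  let b := (EuclideanSpace.basisFun (Fin n) ℝ).toBasis
  let M := LinearMap.toMatrix b b (A : Eu n →ₗ[ℝ] Eu n)
  let P : Polynomial ℝ := Matrix.det ((Polynomial.X : Polynomial ℝ) • M.map Polynomial.C
    + (1 : Matrix (Fin n) (Fin n) ℝ).map Polynomial.C)
  have hP : ∀ s, P.eval s = (1 + s • A).det := by
    intro s
    have h1 : P.eval s = (s • M + 1).det := by
      simp only [P]
      rw [← Polynomial.coe_evalRingHom, RingHom.map_det]
      congr 1
      ext i j
      by_cases hij : i = j
      · simp [hij, mul_comm s]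
      · simp [hij, mul_comm s]
    rw [h1, ContinuousLinearMap.det, ← LinearMap.det_toMatrix b]
    congr 1
    simp [M, add_comm, LinearMap.toMatrix_one]
  have hdeg : P.degree < ((Finset.range (n+1)).card : WithBot ℕ) := by
    refine lt_of_le_of_lt Polynomial.degree_le_natDegree ?_
    have := Polynomial.natDegree_det_X_add_C_le M (1 : Matrix (Fin n) (Fin n) ℝ)
    simp only [Fintype.card_fin] at this
    simp only [Finset.card_range]
    exact_mod_cast Nat.lt_succ_of_le this
  have h := Lagrange.eq_interpolate (v := v) hv.injOn hdeg
  have h2 := congrArg (Polynomial.eval t) h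
  rw [hP, Lagrange.interpolate_apply, Polynomial.eval_finsetSum] at h2
  rw [h2]
  refine Finset.sum_congr rfl fun i _ => ?_
  simp [hP]

lemma small_t_integral {n : ℕ} (r : Eu n → Eu n)
    (hr : ContDiff ℝ 1 r) (h1 : ∀ x, ‖x‖ ≤ 1 → ‖r x‖ = 1) (h2 : ∀ x, ‖x‖ = 1 → r x = x) :
    ∃ ε > 0, ∀ t : ℝ, 0 < t → t < ε →
      ∫ x in ball (0 : Eu n) 1, (1 + t • fderiv ℝ (fun x => r x - x) x).det
        = volume.real (ball (0 : Eu n) 1) := by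
  set g : (Eu n) → (Eu n) := fun x => r x - x with hg
  have hgc : ContDiff ℝ 1 g := hr.sub contDiff_id
  have hgd : Differentiable ℝ g := hgc.differentiable (by norm_num)
  have hfc : Continuous (fderiv ℝ g) := hgc.continuous_fderiv (by norm_num)
  obtain ⟨C, hC⟩ := (isCompact_closedBall (0 : Eu n) 1).exists_bound_of_continuousOn hfc.continuousOn
  set D : ℝ := |C| + 1
  have hD : 0 < D := by positivity
  have hCD : ∀ x ∈ closedBall (0 : Eu n) 1, ‖fderiv ℝ g x‖ ≤ D := fun x hx =>
    (hC x hx).trans ((le_abs_self C).trans (by simp [D]))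
  have hlip : ∀ x ∈ ball (0 : Eu n) 1, ∀ y ∈ ball (0 : Eu n) 1, ‖g x - g y‖ ≤ D * ‖x - y‖ := by
    intro x hx y hy
    exact (convex_ball (0 : Eu n) 1).norm_image_sub_le_of_norm_fderiv_le (𝕜 := ℝ)
      (fun z _ => hgd z) (fun z hz => hCD z (ball_subset_closedBall hz)) hy hx
  obtain ⟨δ, hδ, hdet⟩ : ∃ δ > 0, ∀ B : (Eu n) →L[ℝ] (Eu n), ‖B‖ < δ → 0 < (1 + B).det := by
    have hc : Continuous fun B : (Eu n) →L[ℝ] (Eu n) => (1 + B).det :=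
      ContinuousLinearMap.continuous_det.comp (continuous_const.add continuous_id)
    have h0 : (0:ℝ) < (1 + (0 : (Eu n) →L[ℝ] (Eu n))).det := by simp [ContinuousLinearMap.det]
    have := hc.continuousAt.eventually (lt_mem_nhds h0)
    rw [Metric.eventually_nhds_iff] at this
    obtain ⟨δ, hδ, h⟩ := this
    exact ⟨δ, hδ, fun B hB => h (by simpa using hB)⟩
  refine ⟨min (min 1 (1 / D)) (δ / D), by positivity, fun t ht0 ht => ?_⟩
  have ht1 : t < 1 := ht.trans_le ((min_le_left _ _).trans (min_le_left _ _))
  have htD : t * D < 1 := by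
    have := ht.trans_le ((min_le_left _ _).trans (min_le_right _ _))
    rwa [lt_div_iff₀ hD] at this
  have htδ : t * D < δ := by
    have := ht.trans_le (min_le_right _ _)
    rwa [lt_div_iff₀ hD] at this
  set f : (Eu n) → (Eu n) := fun x => x + t • g x with hf
  have hfcont : Continuous f := continuous_id.add (hgc.continuous.const_smul t)
  have happ : ApproximatesLinearOn f (ContinuousLinearMap.id ℝ (Eu n)) (ball 0 1)
      (Real.toNNReal (t * D)) := by
    rw [ApproximatesLinearOn.approximatesLinearOn_iff_lipschitzOnWith]
    refine LipschitzOnWith.of_dist_le_mul fun x hx y hy => ?_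
    have := hlip x hx y hy
    have e : (f - ⇑(ContinuousLinearMap.id ℝ (Eu n))) x - (f - ⇑(ContinuousLinearMap.id ℝ (Eu n))) y
      = t • (g x - g y) := by simp [f, smul_sub]
    rw [dist_eq_norm, e, norm_smul, dist_eq_norm, Real.norm_of_nonneg ht0.le]
    rw [Real.coe_toNNReal _ (by positivity)]
    nlinarith
  have hinj : InjOn f (ball 0 1) := by
    intro x hx y hy hxy
    have := hlip x hx y hy
    have e : x - y = - (t • (g x - g y)) := by
      simp only [f] at hxy
      rw [smul_sub, neg_sub, sub_eq_sub_iff_add_eq_add, hxy, add_comm]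
    have e2 : ‖x - y‖ = t * ‖g x - g y‖ := by
      conv_lhs => rw [e, norm_neg, norm_smul, Real.norm_of_nonneg ht0.le]
    have : ‖x - y‖ ≤ 0 := by
      have := norm_nonneg (x - y)
      nlinarith
    exact sub_eq_zero.1 (norm_le_zero_iff.1 this)
  have hopen : IsOpen (f '' ball 0 1) := by
    refine happ.open_image ⟨id, 1, by simp, by intro; simp⟩ isOpen_ball (Or.inr ?_)
    simpa using htD
  have hsub : f '' ball 0 1 ⊆ ball 0 1 := by
    rintro _ ⟨x, hx, rfl⟩
    rw [mem_ball_zero_iff] at hx ⊢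
    have e : f x = (1 - t) • x + t • r x := by simp only [f, g]; module
    rw [e]
    refine (norm_add_le _ _).trans_lt ?_
    rw [norm_smul, norm_smul, h1 x hx.le, Real.norm_of_nonneg ht0.le,
      Real.norm_of_nonneg (by linarith)]
    nlinarith
  have himg : f '' ball 0 1 = ball 0 1 := by
    refine hsub.antisymm ?_
    refine (convex_ball (0 : Eu n) 1).isPreconnected.subset_of_closure_inter_subset hopen ?_ ?_
    · exact ⟨f 0, hsub ⟨0, by simp, rfl⟩, ⟨0, by simp, rfl⟩⟩
    · rintro y ⟨hy, hy1⟩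
      have : closure (f '' ball 0 1) ⊆ f '' closedBall 0 1 :=
        closure_minimal (image_mono ball_subset_closedBall)
          ((isCompact_closedBall (0 : Eu n) 1).image hfcont).isClosed
      obtain ⟨x, hx, rfl⟩ := this hy
      refine ⟨x, ?_, rfl⟩
      rw [mem_closedBall_zero_iff] at hx
      rw [mem_ball_zero_iff] at hy1 ⊢
      refine lt_of_le_of_ne hx fun h => ?_
      have : f x = x := by simp [f, g, h2 x h]
      rw [this] at hy1
      linarith
  have hder : ∀ x ∈ ball (0 : Eu n) 1, HasFDerivWithinAt f (1 + t • fderiv ℝ g x) (ball 0 1) x :=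
    fun x _ => ((hasFDerivAt_id x).add ((hgd x).hasFDerivAt.const_smul t)).hasFDerivWithinAt
  have hcv := integral_image_eq_integral_abs_det_fderiv_smul volume measurableSet_ball hder hinj
    (fun _ => (1:ℝ))
  rw [himg] at hcv
  simp only [smul_eq_mul, mul_one, integral_const, measureReal_restrict_apply_univ] at hcv
  rw [hcv]
  refine setIntegral_congr_fun measurableSet_ball fun x hx => ?_
  rw [abs_of_pos]
  apply hdet
  rw [norm_smul, Real.norm_of_nonneg ht0.le]
  have := hCD x (ball_subset_closedBall hx)
  nlinarith

lemma no_retraction {n : ℕ} (r : Eu n → Eu n)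
    (hr : ContDiff ℝ 1 r) (h1 : ∀ x, ‖x‖ ≤ 1 → ‖r x‖ = 1) (h2 : ∀ x, ‖x‖ = 1 → r x = x) :
    False := by
  obtain ⟨ε, hε, key⟩ := small_t_integral r hr h1 h2
  set g : (Eu n) → (Eu n) := fun x => r x - x with hg
  have hgc : ContDiff ℝ 1 g := hr.sub contDiff_id
  have hfc : Continuous (fderiv ℝ g) := hgc.continuous_fderiv (by norm_num)
  let v : ℕ → ℝ := fun i => ε / (i + 2)
  have hv0 : ∀ i, 0 < v i := fun i => by positivity
  have hv1 : ∀ i, v i < ε := fun i => by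
    simp only [v]
    rw [div_lt_iff₀ (by positivity)]
    have : (0:ℝ) ≤ i := by positivity
    nlinarith
  have hv : Function.Injective v := by
    intro i j hij
    simp only [v] at hij
    have hi : (i:ℝ) + 2 ≠ 0 := by positivity
    have hj : (j:ℝ) + 2 ≠ 0 := by positivity
    field_simp at hij
    exact_mod_cast (by linarith : (i:ℝ) = j)
  have hIntegr : ∀ t : ℝ, IntegrableOn (fun x => (1 + t • fderiv ℝ g x).det) (ball (0 : Eu n) 1) := by
    intro t
    have : Continuous (fun x => (1 + t • fderiv ℝ g x).det) :=
      ContinuousLinearMap.continuous_det.comp (continuous_const.add (hfc.const_smul t))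
    exact (this.continuousOn.integrableOn_compact (isCompact_closedBall (0 : Eu n) 1)).mono_set
      ball_subset_closedBall
  have hz : ∀ x ∈ ball (0 : Eu n) 1, (1 + (1:ℝ) • fderiv ℝ g x).det = 0 := by
    intro x hx
    have hrd : DifferentiableAt ℝ r x := hr.differentiable (by norm_num) x
    have e : 1 + (1:ℝ) • fderiv ℝ g x = fderiv ℝ r x := by
      have : fderiv ℝ g x = fderiv ℝ r x - 1 :=
        (hrd.hasFDerivAt.sub (hasFDerivAt_id x)).fderiv
      rw [this, one_smul]; abel
    rw [e]
    have horth : ∀ w, inner ℝ (r x) (fderiv ℝ r x w) = 0 := by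
      intro w
      have hd := (hrd.hasFDerivAt.norm_sq)
      have hev : (fun y => ‖r y‖ ^ 2) =ᶠ[𝓝 x] fun _ => (1:ℝ) := by
        filter_upwards [isOpen_ball.mem_nhds hx] with y hy
        rw [h1 y (mem_ball_zero_iff.1 hy).le]; norm_num
      have h0 := (hd.congr_of_eventuallyEq hev.symm).unique (hasFDerivAt_const (1:ℝ) x)
      have := congrArg (fun L => L w) h0
      simpa using this
    by_contra hne
    have hu : IsUnit (LinearMap.det (fderiv ℝ r x : (Eu n) →ₗ[ℝ] (Eu n))) := isUnit_iff_ne_zero.2 hne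
    have hsurj : Function.Surjective (fderiv ℝ r x) :=
      ((LinearMap.equivOfDetNeZero _ hne).surjective)
    obtain ⟨w, hw⟩ := hsurj (r x)
    have := horth w
    rw [hw, real_inner_self_eq_norm_sq, h1 x (mem_ball_zero_iff.1 hx).le] at this
    norm_num at this
  have h3 : ∫ x in ball (0 : Eu n) 1, (1 + (1:ℝ) • fderiv ℝ g x).det = 0 :=
    setIntegral_eq_zero_of_forall_eq_zero hz
  have h4 : ∫ x in ball (0 : Eu n) 1, (1 + (1:ℝ) • fderiv ℝ g x).det
      = volume.real (ball (0 : Eu n) 1) := by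
    simp_rw [det_interp _ v hv 1]
    rw [integral_finsetSum _ (fun i _ => (hIntegr (v i)).mul_const _)]
    simp_rw [integral_mul_const, key _ (hv0 _) (hv1 _), ← Finset.mul_sum]
    rw [← Polynomial.eval_finsetSum, Lagrange.sum_basis hv.injOn (by simp)]
    simp
  have h5 : 0 < volume.real (ball (0 : Eu n) 1) :=
    ENNReal.toReal_pos (measure_ball_pos volume _ one_pos).ne' measure_ball_lt_top.ne
  linarith

lemma exists_pos_le_norm {n : ℕ} {K : Set (Eu n)} (hK : IsCompact K) {G : Eu n → Eu n}
    (hG : Continuous G) (h0 : ∀ y ∈ K, G y ≠ 0) : ∃ δ > 0, ∀ y ∈ K, δ ≤ ‖G y‖ := by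
  rcases K.eq_empty_or_nonempty with rfl | hne
  · exact ⟨1, one_pos, by simp⟩
  · obtain ⟨y, hy, hmin⟩ := hK.exists_isMinOn hne hG.norm.continuousOn
    exact ⟨‖G y‖, norm_pos_iff.2 (h0 y hy), fun z hz => hmin hz⟩

lemma no_nonvanishing {n : ℕ} (H : Eu n → Eu n) (hH : Continuous H)
    (h0 : ∀ x, ‖x‖ ≤ 1 → H x ≠ 0) (h1 : ∀ x, ‖x‖ ≤ 1 → ‖H x - x‖ ≤ 1 / 2) : False := by
  obtain ⟨δ, hδ, hδH⟩ := exists_pos_le_norm (isCompact_closedBall (0 : Eu n) 1) hH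
    (fun y hy => h0 y (mem_closedBall_zero_iff.1 hy))
  obtain ⟨P, hP, hPH, -⟩ := hH.exists_contDiff_approx 1 (ε := fun _ => min δ (1/4))
    continuous_const (fun _ => by positivity)
  have hPH1 : ∀ x, ‖P x - H x‖ < δ := fun x => by
    rw [← dist_eq_norm]; exact (hPH x).trans_le (min_le_left _ _)
  have hPH2 : ∀ x, ‖P x - H x‖ < 1 / 4 := fun x => by
    rw [← dist_eq_norm]; exact (hPH x).trans_le (min_le_right _ _)
  let χ : ContDiffBump (0 : Eu n) := ⟨9/10, 1, by norm_num, by norm_num⟩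
  let K : Eu n → Eu n := fun x => x + χ x • (P x - x)
  have hK : ContDiff ℝ 1 K := contDiff_id.add (χ.contDiff.smul (hP.sub contDiff_id))
  have hKout : ∀ x, 1 ≤ ‖x‖ → K x = x := by
    intro x hx
    have : χ x = 0 := χ.zero_of_le_dist (by simpa [χ] using hx)
    simp [K, this]
  have hK0 : ∀ x, K x ≠ 0 := by
    intro x hx
    rcases le_or_gt 1 ‖x‖ with h | h
    · rw [hKout x h] at hx
      rw [hx, norm_zero] at h
      linarith
    · rcases le_or_gt ‖x‖ (9/10) with h' | h'
      · have : χ x = 1 := χ.one_of_mem_closedBall (by simpa [χ] using h')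
        have e : P x = 0 := by simpa [K, this] using hx
        have a1 := hPH1 x
        have a2 := hδH x (mem_closedBall_zero_iff.2 h.le)
        rw [e, zero_sub, norm_neg] at a1
        linarith
      · have e : x = - (χ x • (P x - x)) := eq_neg_of_add_eq_zero_left hx
        have e2 : ‖x‖ = χ x * ‖P x - x‖ := by
          conv_lhs => rw [e, norm_neg, norm_smul, Real.norm_of_nonneg χ.nonneg]
        have a1 := hPH2 x
        have a2 := h1 x h.le
        have a3 : ‖P x - x‖ ≤ ‖P x - H x‖ + ‖H x - x‖ := norm_sub_le_norm_sub_add_norm_sub _ _ _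
        have a4 := χ.le_one (x := x)
        have a5 := χ.nonneg (x := x)
        nlinarith [norm_nonneg (P x - x)]
  refine no_retraction (fun x => ‖K x‖⁻¹ • K x) ?_ ?_ ?_
  · exact ((hK.norm ℝ hK0).inv (fun x => norm_ne_zero_iff.2 (hK0 x))).smul hK
  · intro x _
    rw [norm_smul, norm_inv, norm_norm, inv_mul_cancel₀ (norm_ne_zero_iff.2 (hK0 x))]
  · intro x hx
    rw [hKout x hx.ge, hx]; simp

lemma image_mem_nhds_zero {n : ℕ} (F : Eu n → Eu n) (hF : Continuous F)
    (hinj : Function.Injective F) : F '' closedBall 0 1 ∈ 𝓝 (F 0) := by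
  have hS : IsCompact (F '' closedBall 0 1) := (isCompact_closedBall _ _).image hF
  obtain ⟨G, hG⟩ : ∃ G : C(Eu n, Eu n), ∀ x ∈ closedBall (0 : Eu n) 1, G (F x) = x := by
    have : CompactSpace (closedBall (0 : Eu n) 1) := isCompact_iff_compactSpace.1
      (isCompact_closedBall _ _)
    have hc : Continuous (fun x : closedBall (0 : Eu n) 1 => F x) :=
      hF.comp continuous_subtype_val
    have he : IsClosedEmbedding (fun x : closedBall (0 : Eu n) 1 => F x) :=
      hc.isClosedEmbedding (hinj.comp Subtype.val_injective)
    have : TietzeExtension (Eu n) := TietzeExtension.of_tvs ℝ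
    obtain ⟨G, hG⟩ := ContinuousMap.exists_extension he
      (⟨Subtype.val, continuous_subtype_val⟩ : C(closedBall (0 : Eu n) 1, Eu n))
    exact ⟨G, fun x hx => congrArg (fun f => f ⟨x, hx⟩) hG⟩
  by_contra hnot
  have hG0 : G (F 0) = 0 := hG 0 (by simp)
  obtain ⟨ε', hε', hGε'⟩ : ∃ ε > 0, ∀ y, dist y (F 0) < ε → ‖G y‖ < 1 / 10 := by
    have hc : ContinuousAt (fun y => ‖G y‖) (F 0) := G.continuous.norm.continuousAt
    have := hc.eventually (gt_mem_nhds (show ‖G (F 0)‖ < 1 / 10 by simp [hG0]))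
    exact Metric.eventually_nhds_iff.1 this
  obtain ⟨ε, hε, hGε⟩ : ∃ ε > 0, ∀ y, ‖y - F 0‖ < 3 * ε → ‖G y‖ < 1 / 10 :=
    ⟨ε' / 3, by positivity, fun y hy => hGε' y (by rw [dist_eq_norm]; linarith)⟩
  obtain ⟨c, hc, hcS⟩ : ∃ c, ‖c - F 0‖ < ε ∧ c ∉ F '' closedBall 0 1 := by
    by_contra! h
    exact hnot (Metric.mem_nhds_iff.2 ⟨ε, hε, fun y hy => h y (by simpa [dist_eq_norm] using hy)⟩)
  let Φ : Eu n → Eu n := fun y => c + max (ε / ‖y - c‖) 1 • (y - c)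
  have hΦ1 : ∀ y, ε ≤ ‖y - c‖ → Φ y = y := by
    intro y hy
    have hp : 0 < ‖y - c‖ := hε.trans_le hy
    have : max (ε / ‖y - c‖) 1 = 1 := max_eq_right (by rw [div_le_one hp]; exact hy)
    simp [Φ, this]
  have hΦ2 : ∀ y, y ≠ c → ‖y - c‖ ≤ ε → ‖Φ y - c‖ = ε := by
    intro y hyc hy
    have hp : 0 < ‖y - c‖ := norm_pos_iff.2 (sub_ne_zero.2 hyc)
    have : max (ε / ‖y - c‖) 1 = ε / ‖y - c‖ := max_eq_left (by rw [one_le_div hp]; exact hy)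
    simp only [Φ, this, add_sub_cancel_left, norm_smul]
    rw [Real.norm_of_nonneg (by positivity)]
    field_simp
  obtain ⟨δ, hδ, hδG⟩ := exists_pos_le_norm (K := F '' closedBall 0 1 ∩ {y | ε ≤ ‖y - c‖})
    (hS.inter_right (isClosed_le continuous_const (by fun_prop))) G.continuous (by
      rintro _ ⟨⟨x, hx, rfl⟩, hy⟩ h
      rw [hG x hx] at h
      subst h
      rw [mem_ofPred_eq, norm_sub_rev] at hy
      linarith)
  obtain ⟨P, hP, hPG, -⟩ := G.continuous.exists_contDiff_approx 1
    (ε := fun _ => min (δ / 4) (1/20)) continuous_const (fun _ => by positivity)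
  obtain ⟨a, ha, haP⟩ : ∃ a, ‖a‖ < min (δ / 4) (1/20) ∧ a ∉ P '' sphere c ε := by
    by_contra! h
    have hz : volume (P '' sphere c ε) = 0 :=
      addHaar_image_eq_zero_of_differentiableOn_of_addHaar_eq_zero volume
        (hP.differentiable (by norm_num)).differentiableOn
        (Measure.addHaar_sphere_of_ne_zero volume c hε.ne')
    have hsub : ball (0 : Eu n) (min (δ / 4) (1/20)) ⊆ P '' sphere c ε :=
      fun a ha => h a (mem_ball_zero_iff.1 ha)
    exact (measure_ball_pos volume (0 : Eu n) (by positivity)).ne' (measure_mono_null hsub hz)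
  have hPa : ∀ y, ‖(P y - a) - G y‖ < 2 * min (δ / 4) (1/20) := by
    intro y
    have e : (P y - a) - G y = (P y - G y) - a := by abel
    have := hPG y
    rw [dist_eq_norm] at this
    rw [e]
    have := norm_sub_le (P y - G y) a
    linarith
  have m1 : min (δ / 4) (1/20) ≤ δ / 4 := min_le_left _ _
  have m2 : min (δ / 4) (1/20) ≤ 1 / 20 := min_le_right _ _
  let ρ : Eu n → Eu n := fun x => (max 1 ‖x‖)⁻¹ • x
  have hρ1 : ∀ x, ‖x‖ ≤ 1 → ρ x = x := fun x hx => by simp [ρ, max_eq_left hx]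
  have hρ2 : ∀ x, ρ x ∈ closedBall (0 : Eu n) 1 := by
    intro x
    have hp : 0 < max 1 ‖x‖ := lt_max_of_lt_left one_pos
    rw [mem_closedBall_zero_iff]
    simp only [ρ]
    rw [norm_smul, norm_inv, Real.norm_of_nonneg hp.le, inv_mul_le_one₀ hp]
    exact le_max_right _ _
  have hρc : Continuous ρ := by
    refine Continuous.smul (Continuous.inv₀ (continuous_const.max continuous_norm) fun x => ?_) continuous_id
    exact (lt_max_of_lt_left one_pos).ne'
  have hne : ∀ x, F (ρ x) ≠ c := fun x h => hcS ⟨ρ x, hρ2 x, h⟩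
  refine no_nonvanishing (fun x => P (Φ (F (ρ x))) - a) ?_ ?_ ?_
  · have h1 : Continuous fun x => F (ρ x) - c := (hF.comp hρc).sub continuous_const
    have h2 : Continuous fun x => Φ (F (ρ x)) := by
      refine continuous_const.add (Continuous.smul (Continuous.max
        (continuous_const.div h1.norm fun x => ?_) continuous_const) h1)
      exact norm_ne_zero_iff.2 (sub_ne_zero.2 (hne x))
    exact (hP.continuous.comp h2).sub continuous_const
  · intro x hx
    have hn := hne x
    rw [hρ1 x hx] at hn ⊢
    rcases le_total ε ‖F x - c‖ with h | h
    · rw [hΦ1 _ h]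
      intro h0
      have b1 := hPa (F x)
      have b2 := hδG (F x) ⟨⟨x, mem_closedBall_zero_iff.2 hx, rfl⟩, h⟩
      rw [h0, zero_sub, norm_neg] at b1
      linarith
    · intro h0
      exact haP ⟨Φ (F x), by rw [mem_sphere_iff_norm]; exact hΦ2 _ hn h, sub_eq_zero.1 h0⟩
  · intro x hx
    have hn := hne x
    rw [hρ1 x hx] at hn ⊢
    have hGx := hG x (mem_closedBall_zero_iff.2 hx)
    rcases le_total ε ‖F x - c‖ with h | h
    · rw [hΦ1 _ h]
      have b1 := hPa (F x)
      rw [hGx] at b1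
      linarith
    · have b0 := hΦ2 _ hn h
      have b1 : ‖Φ (F x) - F 0‖ < 3 * ε := by
        have := norm_sub_le_norm_sub_add_norm_sub (Φ (F x)) c (F 0)
        linarith
      have b2 : ‖F x - F 0‖ < 3 * ε := by
        have := norm_sub_le_norm_sub_add_norm_sub (F x) c (F 0)
        linarith
      have b3 := hGε _ b1
      have b4 := hGε _ b2
      rw [hGx] at b4
      have b5 := hPa (Φ (F x))
      have b6 : P (Φ (F x)) - a - x = (P (Φ (F x)) - a - G (Φ (F x))) + G (Φ (F x)) - x := by abel
      rw [b6]
      have b7 := norm_sub_le ((P (Φ (F x)) - a - G (Φ (F x))) + G (Φ (F x))) x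
      have b8 := norm_add_le (P (Φ (F x)) - a - G (Φ (F x))) (G (Φ (F x)))
      linarith

/-- Invariance of domain. -/
lemma isOpenMap_of_injective {n : ℕ} (F : Eu n → Eu n) (hF : Continuous F)
    (hinj : Function.Injective F) : IsOpenMap F := by
  rw [isOpenMap_iff_nhds_le]
  intro x s hs
  obtain ⟨ε, hε, hsub⟩ := Metric.nhds_basis_closedBall.mem_iff.1 (Filter.mem_map.1 hs)
  have h := image_mem_nhds_zero (fun y => F (x + ε • y)) (by fun_prop) (by
    intro y z hyz
    have := add_left_cancel (hinj hyz)
    exact smul_right_injective _ hε.ne' this)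
  simp only [smul_zero, add_zero] at h
  refine Filter.mem_of_superset h ?_
  rintro _ ⟨y, hy, rfl⟩
  apply hsub
  rw [mem_closedBall_zero_iff] at hy
  rw [mem_closedBall_iff_norm, add_sub_cancel_left, norm_smul, Real.norm_of_nonneg hε.le]
  nlinarith

lemma isOpenMap_pi {n : ℕ} (F : (Fin n → ℝ) → (Fin n → ℝ)) (hF : Continuous F)
    (hinj : Function.Injective F) : IsOpenMap F := by
  let e : Eu n ≃ₜ (Fin n → ℝ) := (EuclideanSpace.equiv (Fin n) ℝ).toHomeomorph
  have h := isOpenMap_of_injective (fun y => e.symm (F (e y)))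
    (e.symm.continuous.comp (hF.comp e.continuous))
    (e.symm.injective.comp (hinj.comp e.injective))
  have h2 := e.isOpenMap.comp (h.comp e.symm.isOpenMap)
  convert h2 using 1
  ext1 y
  simp

lemma range_eq_univ_of_closed {g : ℝ → ℝ} (hg : Continuous g) (hinj : Function.Injective g)
    (hcl : IsClosed (range g)) : range g = univ := by
  have hmono := hg.strictMono_of_inj hinj
  refine (isPreconnected_range hg).eq_univ_of_unbounded ?_ ?_
  · intro hb
    obtain ⟨t, ht⟩ := hcl.csInf_mem (range_nonempty g) hb
    have hle : ∀ s, g t ≤ g s := fun s => ht ▸ csInf_le hb (mem_range_self s)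
    rcases hmono with h | h
    · exact absurd (h (sub_one_lt t)) (not_lt.2 (hle _))
    · exact absurd (h (lt_add_one t)) (not_lt.2 (hle _))
  · intro hb
    obtain ⟨t, ht⟩ := hcl.csSup_mem (range_nonempty g) hb
    have hle : ∀ s, g s ≤ g t := fun s => ht ▸ le_csSup hb (mem_range_self s)
    rcases hmono with h | h
    · exact absurd (h (lt_add_one t)) (not_lt.2 (hle _))
    · exact absurd (h (sub_one_lt t)) (not_lt.2 (hle _))

end LineAux

/-- **Proposition (continuity upgrades "into" to "onto" for lines).**
Let `F : ℝⁿ → ℝⁿ` be a continuous bijection that maps a certain line `l` into a line.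
Then `F` maps `l` onto a line, i.e. `F '' l` is a line. -/
theorem image_line_isLine_of_continuous_bijective
    {n : ℕ}
    (F : (Fin n → ℝ) → (Fin n → ℝ))
    (hcont : Continuous F) (hbij : Function.Bijective F)
    (l : Set (Fin n → ℝ)) (hl : IsLine l)
    (hinto : ∃ l' : Set (Fin n → ℝ), IsLine l' ∧ F '' l ⊆ l') :
    IsLine (F '' l) := by
  have hopen := LineAux.isOpenMap_pi F hcont hbij.injective
  obtain ⟨a, b, hb, rfl⟩ := hl
  obtain ⟨_, ⟨c, d, hd, rfl⟩, hsub⟩ := hinto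
  have hmem : ∀ t : ℝ, ∃ s : ℝ, F (a + t • b) = c + s • d :=
    fun t => hsub ⟨a + t • b, ⟨t, rfl⟩, rfl⟩
  choose g hg using hmem
  obtain ⟨i, hi⟩ := Function.ne_iff.1 hd
  obtain ⟨j, hj⟩ := Function.ne_iff.1 hb
  simp only [Pi.zero_apply] at hi hj
  have hgi : ∀ t, g t = (F (a + t • b) i - c i) / d i := by
    intro t
    rw [hg t]
    simp [hi]
  have hgc : Continuous g := by
    have : g = fun t => (F (a + t • b) i - c i) / d i := funext hgi
    rw [this]
    have : Continuous fun t : ℝ => F (a + t • b) := hcont.comp (by fun_prop)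
    exact (((continuous_apply i).comp this).sub continuous_const).div_const _
  have hginj : Function.Injective g := by
    intro s t hst
    have h : F (a + s • b) = F (a + t • b) := by rw [hg, hg, hst]
    have h2 := congrFun (add_left_cancel (hbij.injective h)) j
    simpa [hj] using h2
  -- the line `l` is closed
  have hlcl : IsClosed (lineThru a b) := by
    have : lineThru a b = {x | x = a + ((x j - a j) / b j) • b} := by
      ext x
      constructor
      · rintro ⟨t, rfl⟩
        simp [hj]
      · intro h
        exact ⟨_, h⟩
    rw [this]
    exact isClosed_eq continuous_id (by fun_prop)
  have hFcl : IsClosed (F '' lineThru a b) := by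
    rw [← isOpen_compl_iff, ← Set.image_compl_eq hbij]
    exact hopen _ hlcl.isOpen_compl
  have hrange : Set.range g = (fun s : ℝ => c + s • d) ⁻¹' (F '' lineThru a b) := by
    ext s
    constructor
    · rintro ⟨t, rfl⟩
      exact ⟨a + t • b, ⟨t, rfl⟩, hg t⟩
    · rintro ⟨_, ⟨t, rfl⟩, h⟩
      refine ⟨t, ?_⟩
      rw [hg t] at h
      have h2 := congrFun (add_left_cancel h) i
      simpa [hi] using h2
  have huniv := LineAux.range_eq_univ_of_closed hgc hginj (by
    rw [hrange]
    exact hFcl.preimage (by fun_prop))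
  refine ⟨c, d, hd, hsub.antisymm ?_⟩
  rintro _ ⟨s, rfl⟩
  have hs : s ∈ Set.range g := by rw [huniv]; trivial
  rw [hrange] at hs
  exact hs
end

section
/- Let 2 ≤ n ≤ m and let v₁, ..., vₙ be linearly independent vectors in ℝⁿ. Let F : ℝⁿ → ℝᵐ be an injection with F(0) = 0 which maps each line in ℒ(v₁, ..., vₙ) onto a line, and assume moreover that for each i the family of lines parallel to vᵢ is mapped onto the family of lines parallel to F(vᵢ) (parallel lines are mapped onto parallel lines). Then for every 2 ≤ k ≤ n the following hold: (1) F(v₁), ..., F(v_k) are linearly independent; (2) F(span{v₁, ..., v_k}) = span{F(v₁), ..., F(v_k)}; and (3) F(v_k + span{v₁, ..., v_{k−1}}) = F(v_k) + span{F(v₁), ..., F(v_{k−1})}. -/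
theorem image_translate_span {n m : ℕ} (v : Fin n → (Fin n → ℝ))
    (F : (Fin n → ℝ) → (Fin m → ℝ))
    (hK : ∀ (i : Fin n) (a : Fin n → ℝ), F '' lineThru a (v i) = lineThru (F a) (F (v i)))
    (I : Set (Fin n)) :
    ∀ a : Fin n → ℝ, F '' {z | ∃ y ∈ Submodule.span ℝ (v '' I), z = a + y} =
      {z | ∃ y ∈ Submodule.span ℝ ((fun i => F (v i)) '' I), z = F a + y} := by
  induction I, I.toFinite using Set.Finite.induction_on with
  | empty => intro a; simp
  | @insert i J _ _ ih =>
    intro a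
    have ih := ih a
    rw [Set.image_insert_eq, Set.image_insert_eq]
    ext z
    constructor
    · rintro ⟨x, ⟨y, hy, rfl⟩, rfl⟩
      obtain ⟨t, y', hy', rfl⟩ := Submodule.mem_span_insert.1 hy
      have h1 : F (a + y') ∈ {z | ∃ y ∈ Submodule.span ℝ ((fun i => F (v i)) '' J),
          z = F a + y} := by
        rw [← ih]; exact ⟨_, ⟨y', hy', rfl⟩, rfl⟩
      obtain ⟨u, hu, hu'⟩ := h1
      have h2 : F (a + (t • v i + y')) ∈ lineThru (F (a + y')) (F (v i)) := by
        rw [← hK]; exact ⟨_, ⟨t, by abel⟩, rfl⟩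
      obtain ⟨r, hr⟩ := h2
      exact ⟨r • F (v i) + u, Submodule.mem_span_insert.2 ⟨r, u, hu, rfl⟩, by
        rw [hr, hu']; abel⟩
    · rintro ⟨y, hy, rfl⟩
      obtain ⟨t, u, hu, rfl⟩ := Submodule.mem_span_insert.1 hy
      have h1 : F a + u ∈ F '' {z | ∃ y ∈ Submodule.span ℝ (v '' J), z = a + y} := by
        rw [ih]; exact ⟨u, hu, rfl⟩
      obtain ⟨_, ⟨y', hy', rfl⟩, hx⟩ := h1
      have h2 : F a + (t • F (v i) + u) ∈ F '' lineThru (a + y') (v i) := by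
        rw [hK]; exact ⟨t, by rw [hx]; abel⟩
      obtain ⟨_, ⟨r, rfl⟩, hr⟩ := h2
      exact ⟨_, ⟨r • v i + y', Submodule.mem_span_insert.2 ⟨r, y', hy', rfl⟩, by abel⟩, hr⟩

/-- **Lemma (parallelism lemma).** Let `2 ≤ n ≤ m`, let `v₁,…,vₙ ∈ ℝⁿ` be linearly
independent, and let `F : ℝⁿ → ℝᵐ` be injective with `F 0 = 0`, mapping each line in
`ℒ(v₁,…,vₙ)` onto a line, and mapping the family of lines parallel to `vᵢ` onto the
family of lines parallel to `F vᵢ`. Then for every `2 ≤ k ≤ n`: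
(1) `F v₁, …, F v_k` are linearly independent;
(2) `F (span {v₁,…,v_k}) = span {F v₁,…,F v_k}`;
(3) `F (v_k + span {v₁,…,v_{k-1}}) = F v_k + span {F v₁,…,F v_{k-1}}`. -/
theorem parallelism_lemma
    {n m : ℕ} (hn : 2 ≤ n) (hnm : n ≤ m)
    (v : Fin n → (Fin n → ℝ)) (hv : LinearIndependent ℝ v)
    (F : (Fin n → ℝ) → (Fin m → ℝ))
    (hinj : Function.Injective F) (hF0 : F 0 = 0)
    (honto : ∀ (i : Fin n) (a : Fin n → ℝ), IsLine (F '' lineThru a (v i)))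
    (hpar : ∀ i : Fin n,
      (∀ a : Fin n → ℝ, ∃ c : Fin m → ℝ,
        F '' lineThru a (v i) = lineThru c (F (v i))) ∧
      (∀ c : Fin m → ℝ, ∃ a : Fin n → ℝ,
        F '' lineThru a (v i) = lineThru c (F (v i)))) :
    ∀ (k : ℕ) (_hk2 : 2 ≤ k) (hk : k ≤ n),
      LinearIndependent ℝ (fun i : Fin k => F (v (Fin.castLE hk i))) ∧
      F '' (Submodule.span ℝ
          (Set.range fun i : Fin k => v (Fin.castLE hk i)) : Set (Fin n → ℝ)) =
        (Submodule.span ℝ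
          (Set.range fun i : Fin k => F (v (Fin.castLE hk i))) : Set (Fin m → ℝ)) ∧
      F '' {z | ∃ y ∈ Submodule.span ℝ
              (Set.range fun i : Fin (k - 1) => v (Fin.castLE (by omega) i)),
            z = v (Fin.castLE hk ⟨k - 1, by omega⟩) + y} =
        {z | ∃ y ∈ Submodule.span ℝ
              (Set.range fun i : Fin (k - 1) => F (v (Fin.castLE (by omega) i))),
            z = F (v (Fin.castLE hk ⟨k - 1, by omega⟩)) + y} := by
  have hK : ∀ (i : Fin n) (a : Fin n → ℝ),
      F '' lineThru a (v i) = lineThru (F a) (F (v i)) := by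
    intro i a
    obtain ⟨c, hc⟩ := (hpar i).1 a
    rw [hc]
    have h : F a ∈ lineThru c (F (v i)) := by
      rw [← hc]; exact ⟨a, ⟨0, by simp⟩, rfl⟩
    obtain ⟨t, ht⟩ := h
    ext x
    constructor
    · rintro ⟨r, rfl⟩
      exact ⟨r - t, by rw [ht, sub_smul]; abel⟩
    · rintro ⟨r, rfl⟩
      exact ⟨t + r, by rw [ht, add_smul]; abel⟩
  have key := image_translate_span v F hK
  have key0 : ∀ I : Set (Fin n), F '' (Submodule.span ℝ (v '' I) : Set (Fin n → ℝ)) =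
      (Submodule.span ℝ ((fun i => F (v i)) '' I) : Set (Fin m → ℝ)) := by
    intro I
    have h := key I 0
    simpa [hF0] using h
  have hli : LinearIndependent ℝ (fun i => F (v i)) := by
    rw [linearIndependent_iff_notMem_span]
    intro i hi
    rw [← SetLike.mem_coe, ← key0] at hi
    obtain ⟨x, hx, hxi⟩ := hi
    rw [hinj hxi] at hx
    exact linearIndependent_iff_notMem_span.1 hv i hx
  intro k hk2 hk
  have hr : ∀ {d j : ℕ} (hj : j ≤ n) (w : Fin n → (Fin d → ℝ)),
      (Set.range fun i : Fin j => w (Fin.castLE hj i)) = w '' Set.range (Fin.castLE hj) := by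
    intro d j hj w
    rw [← Set.range_comp]; rfl
  refine ⟨hli.comp _ (Fin.castLE_injective hk), ?_, ?_⟩
  · rw [hr hk v, hr hk (fun i => F (v i))]
    exact key0 _
  · rw [hr _ v, hr _ (fun i => F (v i))]
    exact key _ _
end
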